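/- Let α, β ≥ -1/2, let k₀ ≥ 1 be an integer and let 0 ≤ k ≤ k₀ be an integer; if α+β = -1 assume additionally k ≥ 1. Define S_k^{α,β}(θ,φ) = ∫₀^∞ ∂_t^{2k} H_t^{α,β}(θ,φ) · t^{2k₀-1} dt. There exists a constant C depending only on α, β, k, k₀ such that |S_k^{α,β}(θ,φ)| ≤ C / μ_{α,β}^+(B(θ, |θ-φ|)) for all θ, φ ∈ (0,π) with θ ≠ φ. -/

import Mathlib

open MeasureTheory Real Set

noncomputable section

/-- The Jacobi measure `μ_{α,β}^+` on `(0,π)`: density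
`(sin(θ/2))^(2α+1) (cos(θ/2))^(2β+1)` w.r.t. Lebesgue measure on `(0,π)`. -/
def jacobiMeasure (α β : ℝ) : Measure ℝ :=
  (volume.restrict (Ioo 0 π)).withDensity
    (fun θ => ENNReal.ofReal (Real.sin (θ / 2) ^ (2 * α + 1) * Real.cos (θ / 2) ^ (2 * β + 1)))

/-- The ball `B(θ,r) = (θ-r, θ+r) ∩ (0,π)`. -/
def jacobiBall (θ r : ℝ) : Set ℝ := Ioo (θ - r) (θ + r) ∩ Ioo 0 π

/-- The measure `Π_α` on `[-1,1]`. -/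
def PiMeasure (α : ℝ) : Measure ℝ :=
  if α = -(1 / 2) then (2 : ENNReal)⁻¹ • (Measure.dirac (-1) + Measure.dirac 1)
  else
    (volume.restrict (Icc (-1) 1)).withDensity
      (fun u => ENNReal.ofReal
        (Real.Gamma (α + 1) / (Real.sqrt π * Real.Gamma (α + 1 / 2)) * (1 - u ^ 2) ^ (α - 1 / 2)))

/-- `q(θ,φ,u,v) = 1 - u sin(θ/2) sin(φ/2) - v cos(θ/2) cos(φ/2)`. -/
def qfun (θ φ u v : ℝ) : ℝ :=
  1 - u * Real.sin (θ / 2) * Real.sin (φ / 2) - v * Real.cos (θ / 2) * Real.cos (φ / 2)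

/-- `Ψ^{α,β}(t,s) = sinh(t/2) / (cosh(t/2) - 1 + s)^(α+β+2)`. -/
def Psi (α β t s : ℝ) : ℝ :=
  Real.sinh (t / 2) / (Real.cosh (t / 2) - 1 + s) ^ (α + β + 2)

/-- The Jacobi-Poisson kernel `H_t^{α,β}(θ,φ)`. -/
def Hker (α β t θ φ : ℝ) : ℝ :=
  ((2 : ℝ) ^ (-(α + β + 2)) / (jacobiMeasure α β (Ioo 0 π)).toReal) * Real.sinh (t / 2) *
    ∫ u, ∫ v, 1 / (Real.cosh (t / 2) - 1 + qfun θ φ u v) ^ (α + β + 2)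
      ∂(PiMeasure β) ∂(PiMeasure α)

/-- The symmetrized kernel `H̃_t^{α,β}(θ,φ) = (1/4) sin θ sin φ H_t^{α+1,β+1}(θ,φ)`. -/
def Htilde (α β t θ φ : ℝ) : ℝ :=
  (1 / 4) * Real.sin θ * Real.sin φ * Hker (α + 1) (β + 1) t θ φ

end

/-!
Differentiating `sinh(t/2) (cosh(t/2) - 1 + s)^(-a)`, with `a = α + β + 2`, produces combinations of
`sinh(t/2)^i cosh(t/2)^j D^(-b)`, where `D = cosh(t/2) - 1 + s`. Write `N = 2 cosh(t/2)`. As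
`sinh(t/2)² ≤ D N` and `D ≤ N`, each `t`-derivative costs a factor `(N/D)^(1/2)`. For `t ≤ 1`, where
`t² ≲ D`, the `m`-th derivative times `t^n` is therefore `O(D^(-a))` as soon as `m ≤ n + 1`. For
`t ≥ 1` the `m`-th derivative is `O(N^(1 - a))`, which decays exponentially, except when `a = 1`:
then the first derivative loses its leading term and is already `O(N^(-1))`. Since
`D ≳ max(√s, t)²`, integrating in `t` leaves a multiple of `s^(-(a - 1/2))`.

It remains to integrate `q^(-(α + β + 3/2))` against `Π_α ⊗ Π_β`. With `x = 1 - cos((θ - φ)/2)`,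
`A = sin(θ/2) sin(φ/2)` and `B = cos(θ/2) cos(φ/2)`, we have `q = x + (1 - u) A + (1 - v) B`, so
integrating in one variable at a time gives `x^(-1/2) (x + A)^(-α - 1/2) (x + B)^(-β - 1/2)` up to a
constant. The ball has measure `≲ |θ - φ| (θ + φ)^(2α + 1) (2π - θ - φ)^(2β + 1)`, and the two
estimates match because `x ≳ (θ - φ)²`, `x + A = 1 - cos(θ/2) cos(φ/2) ≳ (θ + φ)²` and
`x + B = 1 - sin(θ/2) sin(φ/2) ≳ (2π - θ - φ)²`.
-/

section PowerIntegral

lemma lintegral_Ioc_rpow_sub_one {τ c : ℝ} (hτ : 0 < τ) (hc : 0 ≤ c) :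
    ∫⁻ w in Ioc 0 c, ENNReal.ofReal (w ^ (τ - 1)) = ENNReal.ofReal (c ^ τ / τ) := by
  have hint : IntegrableOn (fun w : ℝ => w ^ (τ - 1)) (Ioc 0 c) :=
    (intervalIntegrable_iff_integrableOn_Ioc_of_le hc).1
      (intervalIntegral.intervalIntegrable_rpow' (by linarith))
  rw [← ofReal_integral_eq_lintegral_ofReal hint
    ((ae_restrict_mem measurableSet_Ioc).mono fun w hw => rpow_nonneg hw.1.le _),
    ← intervalIntegral.integral_of_le hc, integral_rpow (Or.inl (by linarith)), sub_add_cancel,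
    zero_rpow hτ.ne', sub_zero]

lemma lintegral_Ioi_rpow_neg_sub_one {γ c : ℝ} (hγ : 0 < γ) (hc : 0 < c) :
    ∫⁻ w in Ioi c, ENNReal.ofReal (w ^ (-γ - 1)) = ENNReal.ofReal (c ^ (-γ) / γ) := by
  rw [← ofReal_integral_eq_lintegral_ofReal (integrableOn_Ioi_rpow_of_lt (by linarith) hc)
    ((ae_restrict_mem measurableSet_Ioi).mono fun w hw => rpow_nonneg (hc.trans hw).le _),
    integral_Ioi_rpow_of_lt (by linarith) hc, sub_add_cancel, neg_div_neg_eq]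

lemma lintegral_rpow_mul_max_rpow {τ γ x y : ℝ} (hτ : 0 < τ) (hγ : 0 < γ) (hx : 0 < x)
    (hy : 0 < y) :
    ∫⁻ w in Ioi 0, ENNReal.ofReal (w ^ (τ - 1) * max x (w * y) ^ (-(τ + γ))) =
      ENNReal.ofReal ((1 / τ + 1 / γ) * (x ^ (-γ) * y ^ (-τ))) := by
  have hc : 0 < x / y := div_pos hx hy
  have hsmall : ∫⁻ w in Ioc 0 (x / y), ENNReal.ofReal (w ^ (τ - 1) * max x (w * y) ^ (-(τ + γ))) =
      ENNReal.ofReal (1 / τ * (x ^ (-γ) * y ^ (-τ))) := by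
    calc _ = ∫⁻ w in Ioc 0 (x / y),
            ENNReal.ofReal (x ^ (-(τ + γ))) * ENNReal.ofReal (w ^ (τ - 1)) :=
          setLIntegral_congr_fun measurableSet_Ioc fun w hw => by
            rw [max_eq_left ((le_div_iff₀ hy).1 hw.2), mul_comm, ENNReal.ofReal_mul (by positivity)]
      _ = _ := by
          rw [lintegral_const_mul' _ _ ENNReal.ofReal_ne_top, lintegral_Ioc_rpow_sub_one hτ hc.le,
            ← ENNReal.ofReal_mul (by positivity), div_rpow hx.le hy.le, neg_add, rpow_add hx,
            rpow_neg hx.le τ, rpow_neg hy.le]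
          field_simp
  have hlarge : ∫⁻ w in Ioi (x / y), ENNReal.ofReal (w ^ (τ - 1) * max x (w * y) ^ (-(τ + γ))) =
      ENNReal.ofReal (1 / γ * (x ^ (-γ) * y ^ (-τ))) := by
    calc _ = ∫⁻ w in Ioi (x / y),
            ENNReal.ofReal (y ^ (-(τ + γ))) * ENNReal.ofReal (w ^ (-γ - 1)) :=
          setLIntegral_congr_fun measurableSet_Ioi fun w hw => by
            have hw0 : 0 < w := hc.trans hw
            rw [max_eq_right ((div_le_iff₀ hy).1 (le_of_lt hw)),
              ← ENNReal.ofReal_mul (by positivity), mul_rpow hw0.le hy.le,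
              ← mul_assoc, ← rpow_add hw0, mul_comm]
            ring_nf
      _ = _ := by
          rw [lintegral_const_mul' _ _ ENNReal.ofReal_ne_top, lintegral_Ioi_rpow_neg_sub_one hγ hc,
            ← ENNReal.ofReal_mul (by positivity), div_rpow hx.le hy.le, neg_add, rpow_add hy,
            rpow_neg hx.le, rpow_neg hy.le γ]
          field_simp
  rw [← Ioc_union_Ioi_eq_Ioi hc.le, lintegral_union measurableSet_Ioi (Ioc_disjoint_Ioi le_rfl),
    hsmall, hlarge, ← ENNReal.ofReal_add (by positivity) (by positivity), add_mul]

end PowerIntegral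

section PiMeasure

variable {α β : ℝ}

lemma one_sub_sq_rpow_le {p u : ℝ} (hu : |u| ≤ 1) :
    (1 - u ^ 2) ^ p ≤ (1 + 2 ^ p) * (1 - |u|) ^ p := by
  rw [show 1 - u ^ 2 = (1 + |u|) * (1 - |u|) by rw [← sq_abs]; ring,
    mul_rpow (by positivity) (by linarith)]
  refine mul_le_mul_of_nonneg_right ?_ (rpow_nonneg (by linarith) _)
  rcases le_total 0 p with hp | hp
  · linarith [rpow_le_rpow (by positivity) (by linarith : 1 + |u| ≤ 2) hp]
  · linarith [rpow_le_one_of_one_le_of_nonpos (by linarith [abs_nonneg u] : 1 ≤ 1 + |u|) hp,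
      rpow_nonneg zero_le_two p]

lemma integrableOn_one_sub_sq_rpow {p : ℝ} (hp : -1 < p) :
    IntegrableOn (fun u : ℝ => (1 - u ^ 2) ^ p) (Icc (-1) 1) := by
  have hpow : IntervalIntegrable (fun u : ℝ => u ^ p) volume 0 2 :=
    intervalIntegral.intervalIntegrable_rpow' hp
  have hsub : IntegrableOn (fun u : ℝ => (1 - u) ^ p) (Icc (-1) 1) := by
    rw [← intervalIntegrable_iff_integrableOn_Icc_of_le (by norm_num)]
    convert (hpow.comp_sub_left 1).symm using 1 <;> norm_num
  have hadd : IntegrableOn (fun u : ℝ => (1 + u) ^ p) (Icc (-1) 1) := by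
    rw [← intervalIntegrable_iff_integrableOn_Icc_of_le (by norm_num)]
    convert hpow.comp_add_left 1 using 1 <;> norm_num
  refine ((hsub.add hadd).const_mul (1 + 2 ^ p)).mono'
    (by fun_prop : Measurable _).aestronglyMeasurable ?_
  filter_upwards [ae_restrict_mem measurableSet_Icc] with u hu
  have hsub_nonneg : 0 ≤ (1 - u) ^ p := rpow_nonneg (by linarith [hu.2]) p
  have hadd_nonneg : 0 ≤ (1 + u) ^ p := rpow_nonneg (by linarith [hu.1]) p
  have habs : (1 - |u|) ^ p ≤ (1 - u) ^ p + (1 + u) ^ p := by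
    rcases abs_choice u with h | h <;> rw [h]
    · linarith
    · rw [sub_neg_eq_add]; linarith
  rw [norm_of_nonneg (rpow_nonneg (by nlinarith [hu.1, hu.2]) p)]
  calc (1 - u ^ 2) ^ p ≤ (1 + 2 ^ p) * (1 - |u|) ^ p := one_sub_sq_rpow_le (abs_le.2 hu)
    _ ≤ (1 + 2 ^ p) * ((1 - u) ^ p + (1 + u) ^ p) := by gcongr

lemma isFiniteMeasure_PiMeasure (hα : -(1 / 2) ≤ α) : IsFiniteMeasure (PiMeasure α) := by
  rw [PiMeasure]
  split_ifs with h
  · exact ⟨by simp⟩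
  · exact isFiniteMeasure_withDensity_ofReal ((integrableOn_one_sub_sq_rpow
      (by linarith [lt_of_le_of_ne hα (Ne.symm h)])).const_mul _).hasFiniteIntegral

lemma ae_mem_Icc_PiMeasure (α : ℝ) : ∀ᵐ u ∂PiMeasure α, u ∈ Icc (-1 : ℝ) 1 := by
  rw [PiMeasure]
  split_ifs
  · refine Measure.ae_smul_measure (ae_add_measure_iff.2 ⟨?_, ?_⟩) _ <;> simp
  · exact (withDensity_absolutelyContinuous _ _).ae_le (ae_restrict_mem measurableSet_Icc)

lemma exists_setLIntegral_Ioi_PiMeasure_le (hα : -(1 / 2) < α) :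
    ∃ C : ℝ, 0 < C ∧ ∀ f : ℝ → ENNReal, ∫⁻ u in Ioi 0, f u ∂PiMeasure α ≤
      ENNReal.ofReal C * ∫⁻ w in Ioi 0, ENNReal.ofReal (w ^ (α - 1 / 2)) * f (1 - w) := by
  set c : ℝ := Real.Gamma (α + 1) / (√π * Real.Gamma (α + 1 / 2))
  have hc : 0 < c := by
    have := Real.Gamma_pos_of_pos (by linarith : 0 < α + 1)
    have := Real.Gamma_pos_of_pos (by linarith : 0 < α + 1 / 2)
    positivity
  refine ⟨c * (1 + 2 ^ (α - 1 / 2)), by positivity, fun f => ?_⟩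
  set C := c * (1 + 2 ^ (α - 1 / 2))
  set F : ℝ → ENNReal := fun w => ENNReal.ofReal C * (ENNReal.ofReal (w ^ (α - 1 / 2)) * f (1 - w))
  rw [PiMeasure, if_neg hα.ne', restrict_withDensity measurableSet_Ioi,
    Measure.restrict_restrict measurableSet_Ioi]
  calc _ ≤ ∫⁻ u in Ioi 0 ∩ Icc (-1) 1, ENNReal.ofReal (c * (1 - u ^ 2) ^ (α - 1 / 2)) * f u :=
        lintegral_withDensity_le_lintegral_mul _ (by fun_prop) _
    _ ≤ ∫⁻ u in Ioi 0 ∩ Icc (-1) 1, F (1 - u) := by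
        refine setLIntegral_mono' (measurableSet_Ioi.inter measurableSet_Icc) fun u hu => ?_
        have hpow := one_sub_sq_rpow_le (p := α - 1 / 2) (abs_le.2 hu.2)
        rw [abs_of_pos hu.1] at hpow
        simp only [F, sub_sub_cancel]
        rw [← mul_assoc, ← ENNReal.ofReal_mul (by positivity)]
        gcongr ENNReal.ofReal ?_ * f u
        simpa only [C, mul_assoc] using mul_le_mul_of_nonneg_left hpow hc.le
    _ ≤ ∫⁻ u, (Ici 0).indicator F (1 - u) := by
        rw [← lintegral_indicator (measurableSet_Ioi.inter measurableSet_Icc)]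
        refine lintegral_mono (indicator_le fun u hu => ?_)
        rw [indicator_of_mem (show 1 - u ∈ Ici 0 from sub_nonneg.2 hu.2.2)]
    _ = ∫⁻ w in Ici 0, F w := by
        rw [lintegral_sub_left_eq_self, lintegral_indicator measurableSet_Ici]
    _ = _ := by
        rw [← setLIntegral_congr Ioi_ae_eq_Ici, lintegral_const_mul' _ _ ENNReal.ofReal_ne_top]

end PiMeasure

section KernelIntegral

variable {α β γ : ℝ}

lemma exists_setLIntegral_Ioi_PiMeasure_rpow_le (hα : -(1 / 2) < α) (hγ : 0 < γ) :
    ∃ C : ℝ, 0 < C ∧ ∀ x A : ℝ, 0 < x → 0 ≤ A →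
      ∫⁻ u in Ioi 0, ENNReal.ofReal ((x + (1 - u) * A) ^ (-(α + 1 / 2 + γ))) ∂PiMeasure α ≤
        ENNReal.ofReal (C * (x ^ (-γ) * (x + A) ^ (-(α + 1 / 2)))) := by
  have hτ : 0 < α + 1 / 2 := by linarith
  obtain ⟨C, hC, hPi⟩ := exists_setLIntegral_Ioi_PiMeasure_le hα
  refine ⟨C * (1 / (α + 1 / 2) + 1 / γ), by positivity, fun x A hx hA => ?_⟩
  calc _ ≤ ∫⁻ u in Ioi 0,
          ENNReal.ofReal (max x ((1 - u) * (x + A)) ^ (-(α + 1 / 2 + γ))) ∂PiMeasure α := by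
        refine lintegral_mono_ae ?_
        filter_upwards [ae_restrict_mem measurableSet_Ioi,
          ae_restrict_of_ae (ae_mem_Icc_PiMeasure α)] with u hu0 hu
        refine ENNReal.ofReal_le_ofReal (rpow_le_rpow_of_nonpos (lt_max_of_lt_left hx)
          (max_le ?_ ?_) (by linarith))
        · exact le_add_of_nonneg_right (mul_nonneg (sub_nonneg.2 hu.2) hA)
        · rw [mul_add]
          gcongr
          exact mul_le_of_le_one_left hx.le (by linarith [mem_Ioi.1 hu0])
    _ ≤ ENNReal.ofReal C * ∫⁻ w in Ioi 0, ENNReal.ofReal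
          (w ^ (α + 1 / 2 - 1) * max x (w * (x + A)) ^ (-(α + 1 / 2 + γ))) := by
        refine (hPi _).trans_eq (congr_arg _ (setLIntegral_congr_fun measurableSet_Ioi ?_))
        intro w hw
        simp only [sub_sub_cancel]
        rw [← ENNReal.ofReal_mul (rpow_nonneg (le_of_lt hw) _),
          show α + 1 / 2 - 1 = α - 1 / 2 by ring]
    _ = _ := by
        rw [lintegral_rpow_mul_max_rpow hτ hγ hx (by positivity), ← ENNReal.ofReal_mul hC.le,
          mul_assoc]

lemma setLIntegral_PiMeasure_le_mul_measure {s : Set ℝ} (hs : MeasurableSet s) {f : ℝ → ℝ} {b : ℝ}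
    (hf : ∀ u ∈ s ∩ Icc (-1) 1, f u ≤ b) :
    ∫⁻ u in s, ENNReal.ofReal (f u) ∂PiMeasure α ≤ ENNReal.ofReal b * PiMeasure α univ := by
  calc _ ≤ ∫⁻ _ in s, ENNReal.ofReal b ∂PiMeasure α := by
        refine lintegral_mono_ae ?_
        filter_upwards [ae_restrict_mem hs, ae_restrict_of_ae (ae_mem_Icc_PiMeasure α)]
          with u hus hu using ENNReal.ofReal_le_ofReal (hf u ⟨hus, hu⟩)
    _ ≤ _ := by
        rw [setLIntegral_const]
        gcongr
        exact subset_univ s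

lemma exists_lintegral_PiMeasure_rpow_le (hα : -(1 / 2) ≤ α) (hγ : 0 < γ) :
    ∃ C : ℝ, 0 < C ∧ ∀ x A : ℝ, 0 < x → 0 ≤ A →
      ∫⁻ u, ENNReal.ofReal ((x + (1 - u) * A) ^ (-(α + 1 / 2 + γ))) ∂PiMeasure α ≤
        ENNReal.ofReal (C * (x ^ (-γ) * (x + A) ^ (-(α + 1 / 2)))) := by
  have := isFiniteMeasure_PiMeasure hα
  set M := (PiMeasure α).real univ
  have hmul_mass {b : ℝ} (hb : 0 ≤ b) :
      ENNReal.ofReal b * PiMeasure α univ = ENNReal.ofReal (M * b) := by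
    rw [← ofReal_measureReal, ← ENNReal.ofReal_mul hb, mul_comm]
  rcases hα.eq_or_lt with rfl | hlt
  · refine ⟨M + 1, by positivity, fun x A hx hA => ?_⟩
    rw [← setLIntegral_univ]
    refine (setLIntegral_PiMeasure_le_mul_measure MeasurableSet.univ (b := x ^ (-γ)) ?_).trans ?_
    · intro u hu
      norm_num only [zero_add]
      exact rpow_le_rpow_of_nonpos hx
        (le_add_of_nonneg_right (mul_nonneg (sub_nonneg.2 hu.2.2) hA)) (by linarith)
    · rw [hmul_mass (by positivity)]
      norm_num only [rpow_zero, mul_one]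
      gcongr
      exact le_add_of_nonneg_right zero_le_one
  · obtain ⟨C, hC, hpos⟩ := exists_setLIntegral_Ioi_PiMeasure_rpow_le hlt hγ
    refine ⟨M + C, by positivity, fun x A hx hA => ?_⟩
    have hneg : ∫⁻ u in Iic 0, ENNReal.ofReal ((x + (1 - u) * A) ^ (-(α + 1 / 2 + γ))) ∂PiMeasure α
        ≤ ENNReal.ofReal (M * (x ^ (-γ) * (x + A) ^ (-(α + 1 / 2)))) := by
      rw [← hmul_mass (by positivity)]
      refine setLIntegral_PiMeasure_le_mul_measure measurableSet_Iic fun u hu => ?_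
      have hA' : A ≤ (1 - u) * A := le_mul_of_one_le_left hA (by linarith [mem_Iic.1 hu.1])
      rw [neg_add_rev, rpow_add (by linarith)]
      exact mul_le_mul (rpow_le_rpow_of_nonpos hx (by linarith) (by linarith))
        (rpow_le_rpow_of_nonpos (by positivity) (by linarith) (by linarith))
        (rpow_nonneg (by linarith) _) (by positivity)
    rw [← lintegral_add_compl _ measurableSet_Iic, compl_Iic, add_mul,
      ENNReal.ofReal_add (by positivity) (by positivity)]
    exact add_le_add hneg (hpos x A hx hA)

lemma exists_lintegral_prod_PiMeasure_rpow_le (hα : -(1 / 2) ≤ α) (hβ : -(1 / 2) ≤ β)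
    (hγ : 0 < γ) :
    ∃ C : ℝ, 0 < C ∧ ∀ x A B : ℝ, 0 < x → 0 ≤ A → 0 ≤ B →
      ∫⁻ ω, ENNReal.ofReal ((x + (1 - ω.1) * A + (1 - ω.2) * B) ^ (-(α + β + 1 + γ)))
          ∂(PiMeasure α).prod (PiMeasure β) ≤
        ENNReal.ofReal
          (C * (x ^ (-γ) * (x + A) ^ (-(α + 1 / 2)) * (x + B) ^ (-(β + 1 / 2)))) := by
  have := isFiniteMeasure_PiMeasure hα
  have := isFiniteMeasure_PiMeasure hβ
  obtain ⟨C₁, hC₁, hv⟩ := exists_lintegral_PiMeasure_rpow_le hβ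
    (by linarith : 0 < α + 1 / 2 + γ)
  obtain ⟨C₂, hC₂, hu⟩ := exists_lintegral_PiMeasure_rpow_le hα hγ
  refine ⟨C₁ * C₂, by positivity, fun x A B hx hA hB => ?_⟩
  calc _ ≤ ∫⁻ u, ∫⁻ v, ENNReal.ofReal ((x + (1 - u) * A + (1 - v) * B) ^ (-(α + β + 1 + γ)))
          ∂PiMeasure β ∂PiMeasure α := lintegral_prod_le _
    _ ≤ ∫⁻ u, ENNReal.ofReal (C₁ * (x + B) ^ (-(β + 1 / 2))) *
          ENNReal.ofReal ((x + (1 - u) * A) ^ (-(α + 1 / 2 + γ))) ∂PiMeasure α := by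
        refine lintegral_mono_ae ((ae_mem_Icc_PiMeasure α).mono fun u hu => ?_)
        have hxu : x ≤ x + (1 - u) * A :=
          le_add_of_nonneg_right (mul_nonneg (by linarith [hu.2]) hA)
        have hxu0 : 0 < x + (1 - u) * A := hx.trans_le hxu
        rw [show α + β + 1 + γ = β + 1 / 2 + (α + 1 / 2 + γ) by ring,
          ← ENNReal.ofReal_mul (by positivity)]
        refine (hv _ B hxu0 hB).trans (ENNReal.ofReal_le_ofReal ?_)
        rw [mul_assoc, mul_comm (_ ^ (-(β + 1 / 2)))]
        gcongr C₁ * (_ * ?_)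
        exact rpow_le_rpow_of_nonpos (by positivity) (by linarith) (by linarith)
    _ ≤ _ := by
        rw [lintegral_const_mul' _ _ ENNReal.ofReal_ne_top]
        refine (mul_le_mul_right (hu x A hx hA) _).trans_eq ?_
        rw [← ENNReal.ofReal_mul (by positivity)]
        ring_nf

end KernelIntegral

section JacobiMeasure

variable {α β θ φ : ℝ}

lemma sin_half_pos (hθ : θ ∈ Ioo 0 π) : 0 < sin (θ / 2) :=
  sin_pos_of_pos_of_lt_pi (by linarith [hθ.1]) (by linarith [hθ.1, hθ.2])

lemma cos_half_eq_sin (θ : ℝ) : cos (θ / 2) = sin ((π - θ) / 2) := by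
  rw [← sin_pi_div_two_sub, sub_div]

lemma cos_half_pos (hθ : θ ∈ Ioo 0 π) : 0 < cos (θ / 2) := by
  rw [cos_half_eq_sin]
  exact sin_half_pos ⟨by linarith [hθ.2], by linarith [hθ.1]⟩

lemma sq_div_le_one_sub_cos_half {x : ℝ} (hx : |x| ≤ 2 * π) :
    x ^ 2 / (2 * π ^ 2) ≤ 1 - cos (x / 2) := by
  have hcos := cos_le_one_sub_mul_cos_sq (x := x / 2) (by rw [abs_div, abs_two]; linarith)
  have heq : 2 / π ^ 2 * (x / 2) ^ 2 = x ^ 2 / (2 * π ^ 2) := by field_simp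
  linarith

lemma sq_div_le_one_sub_cos_half_mul (hθ : θ ∈ Icc 0 π) (hφ : φ ∈ Icc 0 π) :
    (θ + φ) ^ 2 / (4 * π ^ 2) ≤ 1 - cos (θ / 2) * cos (φ / 2) := by
  have hsum := sq_div_le_one_sub_cos_half (x := θ + φ)
    (by rw [abs_of_nonneg (add_nonneg hθ.1 hφ.1)]; linarith [hθ.2, hφ.2])
  have hdiff := cos_le_one (θ / 2 - φ / 2)
  rw [add_div, cos_add] at hsum
  rw [cos_sub] at hdiff
  have heq : (θ + φ) ^ 2 / (4 * π ^ 2) = (θ + φ) ^ 2 / (2 * π ^ 2) / 2 := by ring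
  linarith

lemma sq_div_le_one_sub_sin_half_mul (hθ : θ ∈ Icc 0 π) (hφ : φ ∈ Icc 0 π) :
    ((π - θ) + (π - φ)) ^ 2 / (4 * π ^ 2) ≤ 1 - sin (θ / 2) * sin (φ / 2) := by
  have h := sq_div_le_one_sub_cos_half_mul (θ := π - θ) (φ := π - φ)
    ⟨by linarith [hθ.2], by linarith [hθ.1]⟩ ⟨by linarith [hφ.2], by linarith [hφ.1]⟩
  rwa [cos_half_eq_sin, cos_half_eq_sin, sub_sub_cancel, sub_sub_cancel] at h

lemma one_sub_cos_half_sub_pos (hθ : θ ∈ Ioo 0 π) (hφ : φ ∈ Ioo 0 π) (hne : θ ≠ φ) :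
    0 < 1 - cos ((θ - φ) / 2) := by
  have : θ - φ ≠ 0 := sub_ne_zero.2 hne
  refine lt_of_lt_of_le (by positivity) (sq_div_le_one_sub_cos_half (x := θ - φ) ?_)
  exact abs_le.2 ⟨by linarith [hθ.1, hφ.2, pi_pos], by linarith [hθ.2, hφ.1, pi_pos]⟩

lemma measurableSet_jacobiBall (θ r : ℝ) : MeasurableSet (jacobiBall θ r) :=
  measurableSet_Ioo.inter measurableSet_Ioo

lemma jacobiMeasure_jacobiBall (α β θ r : ℝ) :
    jacobiMeasure α β (jacobiBall θ r) = ∫⁻ x in jacobiBall θ r,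
      ENNReal.ofReal (sin (x / 2) ^ (2 * α + 1) * cos (x / 2) ^ (2 * β + 1)) := by
  rw [jacobiMeasure, withDensity_apply _ (measurableSet_jacobiBall θ r),
    Measure.restrict_restrict (measurableSet_jacobiBall θ r),
    show jacobiBall θ r ∩ Ioo 0 π = jacobiBall θ r from
      inter_eq_self_of_subset_left inter_subset_right]

lemma jacobiMeasure_jacobiBall_le (hα : -(1 / 2) ≤ α) (hβ : -(1 / 2) ≤ β)
    (hθ : θ ∈ Ioo 0 π) (hφ : φ ∈ Ioo 0 π) :
    jacobiMeasure α β (jacobiBall θ |θ - φ|) ≤ ENNReal.ofReal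
      (2 * (|θ - φ| * (θ + φ) ^ (2 * α + 1) * ((π - θ) + (π - φ)) ^ (2 * β + 1))) := by
  set K := (θ + φ) ^ (2 * α + 1) * ((π - θ) + (π - φ)) ^ (2 * β + 1)
  have hK : 0 ≤ K := mul_nonneg (rpow_nonneg (by linarith [hθ.1, hφ.1]) _)
    (rpow_nonneg (by linarith [hθ.2, hφ.2]) _)
  have hr : |θ - φ| ≤ θ + φ := abs_le.2 ⟨by linarith [hθ.1], by linarith [hφ.1]⟩
  have hr' : |θ - φ| ≤ (π - θ) + (π - φ) := abs_le.2 ⟨by linarith [hφ.2], by linarith [hθ.2]⟩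
  rw [jacobiMeasure_jacobiBall]
  calc _ ≤ ∫⁻ _ in jacobiBall θ |θ - φ|, ENNReal.ofReal K := by
        refine setLIntegral_mono' (measurableSet_jacobiBall _ _) ?_
        rintro x ⟨⟨hxl, hxr⟩, hx⟩
        refine ENNReal.ofReal_le_ofReal (mul_le_mul
          (rpow_le_rpow (sin_half_pos hx).le ?_ (by linarith))
          (rpow_le_rpow (cos_half_pos hx).le ?_ (by linarith))
          (rpow_nonneg (cos_half_pos hx).le _) (rpow_nonneg (by linarith [hθ.1, hφ.1]) _))
        · exact (sin_le (by linarith [hx.1])).trans (by linarith [hφ.1])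
        · rw [cos_half_eq_sin]
          exact (sin_le (by linarith [hx.2])).trans (by linarith [hφ.2])
    _ ≤ ENNReal.ofReal K * volume (Ioo (θ - |θ - φ|) (θ + |θ - φ|)) := by
        rw [setLIntegral_const]
        gcongr
        exact inter_subset_left
    _ = _ := by
        rw [volume_Ioo, ← ENNReal.ofReal_mul hK]
        congr 1
        ring

lemma toReal_jacobiMeasure_jacobiBall_pos (hα : -(1 / 2) ≤ α) (hβ : -(1 / 2) ≤ β)
    (hθ : θ ∈ Ioo 0 π) (hφ : φ ∈ Ioo 0 π) (hne : θ ≠ φ) :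
    0 < (jacobiMeasure α β (jacobiBall θ |θ - φ|)).toReal := by
  have hr : 0 < |θ - φ| := abs_pos.2 (sub_ne_zero.2 hne)
  refine ENNReal.toReal_pos (ne_of_gt ?_)
    ((jacobiMeasure_jacobiBall_le hα hβ hθ hφ).trans_lt ENNReal.ofReal_lt_top).ne
  rw [jacobiMeasure_jacobiBall, setLIntegral_pos_iff (by fun_prop), inter_eq_self_of_subset_right]
  · exact (isOpen_Ioo.inter isOpen_Ioo).measure_pos _ ⟨θ, ⟨by linarith, by linarith⟩, hθ⟩
  · rintro x ⟨-, hx⟩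
    have := sin_half_pos hx
    have := cos_half_pos hx
    exact (ENNReal.ofReal_pos.2 (by positivity)).ne'

lemma rpow_two_mul_le {c p y z : ℝ} (hc : 0 < c) (hp : 0 ≤ p) (hy : 0 ≤ y) (h : y ^ 2 / c ≤ z) :
    y ^ (2 * p) ≤ c ^ p * z ^ p := by
  have hz : 0 ≤ z := (by positivity : 0 ≤ y ^ 2 / c).trans h
  rw [rpow_mul hy, rpow_two, ← mul_rpow hc.le hz, mul_comm c]
  exact rpow_le_rpow (sq_nonneg y) ((div_le_iff₀ hc).1 h) hp

lemma exists_toReal_jacobiMeasure_jacobiBall_le (hα : -(1 / 2) ≤ α) (hβ : -(1 / 2) ≤ β) :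
    ∃ C : ℝ, 0 < C ∧ ∀ θ ∈ Ioo 0 π, ∀ φ ∈ Ioo 0 π,
      (jacobiMeasure α β (jacobiBall θ |θ - φ|)).toReal ≤
        C * ((1 - cos ((θ - φ) / 2)) ^ (1 / 2 : ℝ) * (1 - cos (θ / 2) * cos (φ / 2)) ^ (α + 1 / 2) *
          (1 - sin (θ / 2) * sin (φ / 2)) ^ (β + 1 / 2)) := by
  refine ⟨2 * ((2 * π ^ 2) ^ (1 / 2 : ℝ) * (4 * π ^ 2) ^ (α + 1 / 2) * (4 * π ^ 2) ^ (β + 1 / 2)),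
    by positivity, fun θ hθ φ hφ => ?_⟩
  have hdist : |θ - φ| ≤ (2 * π ^ 2) ^ (1 / 2 : ℝ) * (1 - cos ((θ - φ) / 2)) ^ (1 / 2 : ℝ) := by
    have h := rpow_two_mul_le (p := 1 / 2) (by positivity) (by norm_num) (abs_nonneg (θ - φ))
      ((sq_abs (θ - φ)).symm ▸ sq_div_le_one_sub_cos_half (abs_le.2
        ⟨by linarith [hθ.1, hφ.2, pi_pos], by linarith [hθ.2, hφ.1, pi_pos]⟩))
    rwa [mul_one_div_cancel two_ne_zero, rpow_one] at h
  have hsin := rpow_two_mul_le (p := α + 1 / 2) (by positivity) (by linarith)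
    (by linarith [hθ.1, hφ.1])
    (sq_div_le_one_sub_cos_half_mul (Ioo_subset_Icc_self hθ) (Ioo_subset_Icc_self hφ))
  have hcos := rpow_two_mul_le (p := β + 1 / 2) (by positivity) (by linarith)
    (by linarith [hθ.2, hφ.2])
    (sq_div_le_one_sub_sin_half_mul (Ioo_subset_Icc_self hθ) (Ioo_subset_Icc_self hφ))
  rw [show 2 * (α + 1 / 2) = 2 * α + 1 by ring] at hsin
  rw [show 2 * (β + 1 / 2) = 2 * β + 1 by ring] at hcos
  have hsum : 0 ≤ (θ + φ) ^ (2 * α + 1) := rpow_nonneg (by linarith [hθ.1, hφ.1]) _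
  have hsum' : 0 ≤ ((π - θ) + (π - φ)) ^ (2 * β + 1) := rpow_nonneg (by linarith [hθ.2, hφ.2]) _
  refine (ENNReal.toReal_le_of_le_ofReal (by positivity)
    (jacobiMeasure_jacobiBall_le hα hβ hθ hφ)).trans ?_
  calc _ ≤ 2 * (((2 * π ^ 2) ^ (1 / 2 : ℝ) * (1 - cos ((θ - φ) / 2)) ^ (1 / 2 : ℝ)) *
        ((4 * π ^ 2) ^ (α + 1 / 2) * (1 - cos (θ / 2) * cos (φ / 2)) ^ (α + 1 / 2)) *
        ((4 * π ^ 2) ^ (β + 1 / 2) * (1 - sin (θ / 2) * sin (φ / 2)) ^ (β + 1 / 2))) := by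
        gcongr 2 * ?_
        exact mul_le_mul (mul_le_mul hdist hsin hsum ((abs_nonneg _).trans hdist)) hcos hsum'
          (mul_nonneg ((abs_nonneg _).trans hdist) (hsum.trans hsin))
    _ = _ := by ring

lemma qfun_eq_one_sub_cos_add (θ φ u v : ℝ) :
    qfun θ φ u v = (1 - cos ((θ - φ) / 2)) + (1 - u) * (sin (θ / 2) * sin (φ / 2)) +
      (1 - v) * (cos (θ / 2) * cos (φ / 2)) := by
  rw [sub_div, cos_sub, qfun]
  ring

lemma qfun_mem_Icc (hθ : θ ∈ Ioo 0 π) (hφ : φ ∈ Ioo 0 π) {u v : ℝ} (hu : u ∈ Icc (-1) 1)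
    (hv : v ∈ Icc (-1) 1) : qfun θ φ u v ∈ Icc (1 - cos ((θ - φ) / 2)) 2 := by
  have hs := mul_pos (sin_half_pos hθ) (sin_half_pos hφ)
  have hc := mul_pos (cos_half_pos hθ) (cos_half_pos hφ)
  constructor
  · rw [qfun_eq_one_sub_cos_add]
    nlinarith [hu.2, hv.2]
  · have hcos := cos_le_one (θ / 2 - φ / 2)
    rw [cos_sub] at hcos
    rw [qfun]
    nlinarith [hu.1, hv.1]

lemma exists_lintegral_qfun_rpow_le (hα : -(1 / 2) ≤ α) (hβ : -(1 / 2) ≤ β) :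
    ∃ C : ℝ, 0 < C ∧ ∀ θ ∈ Ioo 0 π, ∀ φ ∈ Ioo 0 π, θ ≠ φ →
      ∫⁻ ω, ENNReal.ofReal (qfun θ φ ω.1 ω.2 ^ (-(α + β + 3 / 2)))
          ∂(PiMeasure α).prod (PiMeasure β) ≤
        ENNReal.ofReal (C / (jacobiMeasure α β (jacobiBall θ |θ - φ|)).toReal) := by
  obtain ⟨C₁, hC₁, hker⟩ := exists_lintegral_prod_PiMeasure_rpow_le hα hβ one_half_pos
  obtain ⟨C₂, hC₂, hball⟩ := exists_toReal_jacobiMeasure_jacobiBall_le hα hβ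
  refine ⟨C₁ * C₂, by positivity, fun θ hθ φ hφ hne => ?_⟩
  set A := sin (θ / 2) * sin (φ / 2) with hA
  set B := cos (θ / 2) * cos (φ / 2) with hB
  set x := 1 - cos ((θ - φ) / 2) with hx
  have hx0 : 0 < x := one_sub_cos_half_sub_pos hθ hφ hne
  have hA0 : 0 < A := mul_pos (sin_half_pos hθ) (sin_half_pos hφ)
  have hB0 : 0 < B := mul_pos (cos_half_pos hθ) (cos_half_pos hφ)
  have hcos : cos ((θ - φ) / 2) = B + A := by rw [sub_div, cos_sub]
  have hμ := toReal_jacobiMeasure_jacobiBall_pos hα hβ hθ hφ hne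
  have hball := hball θ hθ φ hφ
  rw [← hA, ← hB, ← hx, show 1 - B = x + A by rw [hx, hcos]; ring,
    show 1 - A = x + B by rw [hx, hcos]; ring] at hball
  simp only [qfun_eq_one_sub_cos_add, ← hA, ← hB, ← hx]
  rw [show α + β + 3 / 2 = α + β + 1 + 1 / 2 by ring]
  refine (hker x A B hx0 hA0.le hB0.le).trans (ENNReal.ofReal_le_ofReal ?_)
  rw [le_div_iff₀ hμ]
  calc _ ≤ C₁ * (x ^ (-(1 / 2) : ℝ) * (x + A) ^ (-(α + 1 / 2)) * (x + B) ^ (-(β + 1 / 2))) *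
        (C₂ * (x ^ (1 / 2 : ℝ) * (x + A) ^ (α + 1 / 2) * (x + B) ^ (β + 1 / 2))) := by gcongr
    _ = C₁ * C₂ := by
        rw [rpow_neg hx0.le, rpow_neg (by positivity), rpow_neg (by positivity)]
        field_simp

end JacobiMeasure

/-- The functions `t ↦ sinh(t/2)^i cosh(t/2)^j / (cosh(t/2) - 1 + s)^b`, whose span is stable under
`d/dt`. The integrand of the Jacobi–Poisson kernel is the case `i = 1`, `j = 0`, `b = α + β + 2`,
`s = q(θ,φ,u,v)`. -/
noncomputable def hypMonomial (i j : ℕ) (b s t : ℝ) : ℝ :=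
  Real.sinh (t / 2) ^ i * Real.cosh (t / 2) ^ j * (Real.cosh (t / 2) - 1 + s) ^ (-b)

namespace hypMonomial

variable {a b s t : ℝ}

lemma le_cosh_half_sub_one_add (s t : ℝ) : s ≤ Real.cosh (t / 2) - 1 + s := by
  linarith [Real.one_le_cosh (t / 2)]

lemma cosh_half_sub_one_add_pos (hs : 0 < s) (t : ℝ) : 0 < Real.cosh (t / 2) - 1 + s :=
  hs.trans_le (le_cosh_half_sub_one_add s t)

lemma contDiff (i j : ℕ) (b : ℝ) (hs : 0 < s) {n : WithTop ℕ∞} :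
    ContDiff ℝ n (hypMonomial i j b s) := by
  have hbase : ContDiff ℝ n fun t => (Real.cosh (t / 2) - 1 + s) ^ (-b) :=
    ContDiff.rpow_const_of_ne (by fun_prop) fun t => (cosh_half_sub_one_add_pos hs t).ne'
  unfold hypMonomial
  fun_prop

-- For `i = 0` or `j = 0` the truncated exponent is harmless: its coefficient vanishes.
lemma deriv_eq (i j : ℕ) (b : ℝ) (hs : 0 < s) :
    deriv (hypMonomial i j b s) = fun t => i / 2 * hypMonomial (i - 1) (j + 1) b s t +
      j / 2 * hypMonomial (i + 1) (j - 1) b s t + -b / 2 * hypMonomial (i + 1) j (b + 1) s t := by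
  ext t
  have hhalf : HasDerivAt (fun t : ℝ => t / 2) (1 / 2) t := (hasDerivAt_id t).div_const 2
  have hsinh := hhalf.sinh.fun_pow i
  have hcosh := hhalf.cosh.fun_pow j
  have hpow := ((hhalf.cosh.sub_const 1).add_const s).rpow_const (p := -b)
    (Or.inl (cosh_half_sub_one_add_pos hs t).ne')
  refine ((hsinh.mul hcosh).mul hpow).deriv.trans ?_
  simp only [hypMonomial, neg_add', Pi.mul_apply]
  ring

lemma iteratedDeriv_succ_eq (m i j : ℕ) (b : ℝ) (hs : 0 < s) (t : ℝ) :
    iteratedDeriv (m + 1) (hypMonomial i j b s) t =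
      i / 2 * iteratedDeriv m (hypMonomial (i - 1) (j + 1) b s) t +
      j / 2 * iteratedDeriv m (hypMonomial (i + 1) (j - 1) b s) t +
      -b / 2 * iteratedDeriv m (hypMonomial (i + 1) j (b + 1) s) t := by
  have hsmooth (i j : ℕ) (b c : ℝ) : ContDiffAt ℝ m (fun t => c * hypMonomial i j b s t) t :=
    contDiffAt_const.mul (contDiff i j b hs).contDiffAt
  rw [iteratedDeriv_succ', deriv_eq i j b hs,
    iteratedDeriv_fun_add ((hsmooth _ _ _ _).add (hsmooth _ _ _ _)) (hsmooth _ _ _ _),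
    iteratedDeriv_fun_add (hsmooth _ _ _ _) (hsmooth _ _ _ _), iteratedDeriv_const_mul_field,
    iteratedDeriv_const_mul_field, iteratedDeriv_const_mul_field]

lemma abs_sinh_half_pow_le (i : ℕ) (hs : 0 < s) (t : ℝ) :
    |Real.sinh (t / 2)| ^ i ≤
      (Real.cosh (t / 2) - 1 + s) ^ (i / 2 : ℝ) * (2 * Real.cosh (t / 2)) ^ (i / 2 : ℝ) := by
  have hcosh := Real.one_le_cosh (t / 2)
  have hsq : Real.sinh (t / 2) ^ 2 ≤ (Real.cosh (t / 2) - 1 + s) * (2 * Real.cosh (t / 2)) := by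
    rw [Real.sinh_sq]
    nlinarith
  rw [← mul_rpow (by linarith) (by linarith), ← rpow_natCast]
  calc |Real.sinh (t / 2)| ^ (i : ℝ) = (Real.sinh (t / 2) ^ 2) ^ (i / 2 : ℝ) := by
        rw [← sq_abs, ← rpow_two, ← rpow_mul (abs_nonneg _), mul_div_cancel₀ _ two_ne_zero]
    _ ≤ _ := rpow_le_rpow (sq_nonneg _) hsq (by positivity)

lemma abs_le_rpow_mul_rpow {i j : ℕ} {κ : ℝ} (hκ : κ ≤ i / 2 - b) (hs : s ∈ Ioc 0 2) (t : ℝ) :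
    |hypMonomial i j b s t| ≤
      (Real.cosh (t / 2) - 1 + s) ^ κ * (2 * Real.cosh (t / 2)) ^ (i + j - b - κ) := by
  have hcosh := Real.one_le_cosh (t / 2)
  have hsinh := abs_sinh_half_pow_le i hs.1 t
  have hD := cosh_half_sub_one_add_pos hs.1 t
  have hDN : Real.cosh (t / 2) - 1 + s ≤ 2 * Real.cosh (t / 2) := by linarith [hs.2]
  set D := Real.cosh (t / 2) - 1 + s with hDdef
  set N := 2 * Real.cosh (t / 2)
  have hN : 0 < N := hD.trans_le hDN
  have hcosh_pow : Real.cosh (t / 2) ^ j ≤ N ^ (j : ℝ) := by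
    rw [rpow_natCast]
    exact pow_le_pow_left₀ (by linarith) (by linarith) j
  calc |hypMonomial i j b s t| = |Real.sinh (t / 2)| ^ i * Real.cosh (t / 2) ^ j * D ^ (-b) := by
        rw [hypMonomial, ← hDdef, abs_mul, abs_mul, abs_pow, abs_pow,
          abs_of_nonneg (rpow_nonneg hD.le _), abs_of_pos (Real.cosh_pos _)]
    _ ≤ (D ^ (i / 2 : ℝ) * N ^ (i / 2 : ℝ)) * N ^ (j : ℝ) * D ^ (-b) := by gcongr
    _ = D ^ κ * (D ^ (i / 2 - b - κ) * N ^ (i / 2 + j : ℝ)) := by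
        rw [← mul_assoc, ← rpow_add hD, rpow_add hN, show κ + (i / 2 - b - κ) = i / 2 + -b by ring,
          rpow_add hD]
        ring
    _ ≤ D ^ κ * (N ^ (i / 2 - b - κ) * N ^ (i / 2 + j : ℝ)) := by
        gcongr
    _ = D ^ κ * N ^ (i + j - b - κ) := by
        rw [← rpow_add hN]
        ring_nf

lemma exists_abs_iteratedDeriv_le (m : ℕ) : ∀ (i j : ℕ) (b κ : ℝ), κ ≤ i / 2 - b →
    ∃ C : ℝ, 0 ≤ C ∧ ∀ s ∈ Ioc (0 : ℝ) 2, ∀ t : ℝ, |iteratedDeriv m (hypMonomial i j b s) t| ≤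
      C * ((Real.cosh (t / 2) - 1 + s) ^ (κ - m / 2) *
        (2 * Real.cosh (t / 2)) ^ (i + j - b - (κ - m / 2))) := by
  induction m with
  | zero =>
    intro i j b κ hκ
    refine ⟨1, zero_le_one, fun s hs t => ?_⟩
    simpa using abs_le_rpow_mul_rpow hκ hs t
  | succ m ih =>
    intro i j b κ hκ
    have hpiece (c : ℝ) (i' j' : ℕ) (b' : ℝ)
        (h : c = 0 ∨ κ - 1 / 2 ≤ i' / 2 - b' ∧ (i' + j' - b' : ℝ) = i + j - b) :
        ∃ C : ℝ, 0 ≤ C ∧ ∀ s ∈ Ioc (0 : ℝ) 2, ∀ t : ℝ,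
          |c * iteratedDeriv m (hypMonomial i' j' b' s) t| ≤
            C * ((Real.cosh (t / 2) - 1 + s) ^ (κ - (m + 1 : ℕ) / 2) *
              (2 * Real.cosh (t / 2)) ^ (i + j - b - (κ - (m + 1 : ℕ) / 2))) := by
      rcases h with rfl | ⟨hκ', hdeg⟩
      · exact ⟨0, le_rfl, fun s _ t => by simp⟩
      · obtain ⟨C, hC, hbound⟩ := ih i' j' b' (κ - 1 / 2) hκ'
        refine ⟨|c| * C, by positivity, fun s hs t => ?_⟩
        rw [abs_mul, mul_assoc, show κ - (m + 1 : ℕ) / 2 = κ - 1 / 2 - m / 2 by push_cast; ring,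
          ← hdeg]
        exact mul_le_mul_of_nonneg_left (hbound s hs t) (abs_nonneg c)
    obtain ⟨C₁, hC₁, h₁⟩ := hpiece (i / 2) (i - 1) (j + 1) b (by
      rcases i with _ | i
      · simp
      · right; push_cast [Nat.add_sub_cancel] at hκ ⊢; constructor <;> linarith)
    obtain ⟨C₂, hC₂, h₂⟩ := hpiece (j / 2) (i + 1) (j - 1) b (by
      rcases j with _ | j
      · simp
      · right; push_cast [Nat.add_sub_cancel]; constructor <;> linarith)
    obtain ⟨C₃, hC₃, h₃⟩ := hpiece (-b / 2) (i + 1) j (b + 1) (by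
      right; push_cast; constructor <;> linarith)
    refine ⟨C₁ + C₂ + C₃, by positivity, fun s hs t => ?_⟩
    rw [iteratedDeriv_succ_eq m i j b hs.1, add_mul, add_mul]
    exact (abs_add_three _ _ _).trans (add_le_add (add_le_add (h₁ s hs t) (h₂ s hs t)) (h₃ s hs t))

lemma exists_abs_iteratedDeriv_one_zero_le (m : ℕ) (a : ℝ) :
    ∃ C : ℝ, 0 ≤ C ∧ ∀ s ∈ Ioc (0 : ℝ) 2, ∀ t : ℝ, |iteratedDeriv m (hypMonomial 1 0 a s) t| ≤
      C * ((Real.cosh (t / 2) - 1 + s) ^ (1 / 2 - a - m / 2) *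
        (2 * Real.cosh (t / 2)) ^ ((m + 1) / 2 : ℝ)) := by
  obtain ⟨C, hC, hbound⟩ := exists_abs_iteratedDeriv_le m 1 0 a (1 / 2 - a) (by norm_num)
  refine ⟨C, hC, fun s hs t => (hbound s hs t).trans_eq ?_⟩
  congr 3
  push_cast
  ring

lemma exists_abs_iteratedDeriv_le_of_abs_le (ha : 1 / 2 ≤ a) (m : ℕ) {σ : ℝ} (hσ : 0 < σ) (T : ℝ) :
    ∃ C : ℝ, ∀ s ∈ Icc σ 2, ∀ t : ℝ, |t| ≤ T → |iteratedDeriv m (hypMonomial 1 0 a s) t| ≤ C := by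
  obtain ⟨C, hC, hbound⟩ := exists_abs_iteratedDeriv_one_zero_le m a
  refine ⟨C * (σ ^ (1 / 2 - a - m / 2) * (2 * Real.cosh (T / 2)) ^ ((m + 1) / 2 : ℝ)),
    fun s hs t ht => ?_⟩
  have hcosh : Real.cosh (t / 2) ≤ Real.cosh (T / 2) := by
    rw [Real.cosh_le_cosh, abs_div, abs_div]
    exact div_le_div_of_nonneg_right (ht.trans (le_abs_self T)) (abs_nonneg 2)
  have hexp : 1 / 2 - a - m / 2 ≤ 0 := by linarith [(m.cast_nonneg : (0 : ℝ) ≤ m)]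
  have := cosh_half_sub_one_add_pos (hσ.trans_le hs.1) t
  refine (hbound s ⟨hσ.trans_le hs.1, hs.2⟩ t).trans ?_
  gcongr C * (?_ * ?_)
  · exact rpow_le_rpow_of_nonpos hσ (hs.1.trans (le_cosh_half_sub_one_add s t)) hexp
  · exact rpow_le_rpow (by positivity) (by linarith) (by positivity)

lemma max_sqrt_sq_le_cosh_half_sub_one_add (hs : 0 ≤ s) (ht : 0 ≤ t) :
    max √s (t * 3⁻¹) ^ 2 ≤ Real.cosh (t / 2) - 1 + s := by
  have hcosh : Real.cosh (t / 2) = 1 + 2 * Real.sinh (t / 4) ^ 2 := by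
    rw [show t / 2 = 2 * (t / 4) by ring, Real.cosh_two_mul, Real.cosh_sq]
    ring
  have hsinh : t / 4 ≤ Real.sinh (t / 4) := Real.self_le_sinh_iff.2 (by positivity)
  rcases max_choice √s (t * 3⁻¹) with h | h <;> rw [h]
  · rw [Real.sq_sqrt hs]
    exact le_cosh_half_sub_one_add s t
  · nlinarith [mul_self_le_mul_self (by positivity) hsinh]

lemma pow_le_three_pow_mul_cosh_half_rpow (hs : 0 < s) (ht : 0 ≤ t) (n : ℕ) :
    t ^ n ≤ 3 ^ n * (Real.cosh (t / 2) - 1 + s) ^ (n / 2 : ℝ) := by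
  have hD := (cosh_half_sub_one_add_pos hs t).le
  have hle : t * 3⁻¹ ≤ (Real.cosh (t / 2) - 1 + s) ^ (1 / 2 : ℝ) := by
    rw [← Real.sqrt_eq_rpow]
    exact (le_max_right _ _).trans
      (Real.le_sqrt_of_sq_le (max_sqrt_sq_le_cosh_half_sub_one_add hs.le ht))
  calc t ^ n = 3 ^ n * (t * 3⁻¹) ^ n := by rw [← mul_pow]; congr 1; ring
    _ ≤ 3 ^ n * ((Real.cosh (t / 2) - 1 + s) ^ (1 / 2 : ℝ)) ^ n := by gcongr
    _ = 3 ^ n * (Real.cosh (t / 2) - 1 + s) ^ (n / 2 : ℝ) := by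
        rw [← rpow_mul_natCast hD]
        ring_nf

lemma exists_abs_iteratedDeriv_mul_pow_le_of_le_one (ha : 0 ≤ a) {m n : ℕ} (hmn : m ≤ n + 1) :
    ∃ C : ℝ, 0 ≤ C ∧ ∀ s ∈ Ioc (0 : ℝ) 2, ∀ t ∈ Ioc (0 : ℝ) 1,
      |iteratedDeriv m (hypMonomial 1 0 a s) t| * t ^ n ≤
        C * max √s (t * 3⁻¹) ^ (-(2 * a)) := by
  obtain ⟨C, hC, hbound⟩ := exists_abs_iteratedDeriv_one_zero_le m a
  have hmn' : (m : ℝ) ≤ n + 1 := by exact_mod_cast hmn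
  refine ⟨C * (3 ^ n * (2 * Real.cosh (1 / 2)) ^ ((n + 2) / 2 : ℝ)), by positivity,
    fun s hs t ht => ?_⟩
  have hDmax := max_sqrt_sq_le_cosh_half_sub_one_add hs.1.le ht.1.le
  have htD := pow_le_three_pow_mul_cosh_half_rpow hs.1 ht.1.le n
  have hbound := hbound s hs t
  have hDN : Real.cosh (t / 2) - 1 + s ≤ 2 * Real.cosh (t / 2) := by
    linarith [hs.2, Real.one_le_cosh (t / 2)]
  have hNT : 2 * Real.cosh (t / 2) ≤ 2 * Real.cosh (1 / 2) := by
    gcongr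
    rw [Real.cosh_le_cosh, abs_of_pos (half_pos ht.1), abs_of_pos one_half_pos]
    linarith [ht.2]
  have hD := cosh_half_sub_one_add_pos hs.1 t
  set D := Real.cosh (t / 2) - 1 + s
  set N := 2 * Real.cosh (t / 2)
  have hN : 0 < N := hD.trans_le hDN
  have hmax : 0 < max √s (t * 3⁻¹) := lt_max_of_lt_left (Real.sqrt_pos.2 hs.1)
  calc |iteratedDeriv m (hypMonomial 1 0 a s) t| * t ^ n
      ≤ C * (D ^ (1 / 2 - a - m / 2) * N ^ ((m + 1) / 2 : ℝ)) * (3 ^ n * D ^ (n / 2 : ℝ)) :=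
        mul_le_mul hbound htD (pow_nonneg ht.1.le n) (by positivity)
    _ = C * 3 ^ n * (D ^ (-a) * (D ^ ((n + 1 - m) / 2 : ℝ) * N ^ ((m + 1) / 2 : ℝ))) := by
        rw [← mul_assoc (D ^ (-a)), ← rpow_add hD, show -a + (n + 1 - m) / 2 =
          1 / 2 - a - m / 2 + n / 2 by ring, rpow_add hD]
        ring
    _ ≤ C * 3 ^ n * ((max √s (t * 3⁻¹) ^ 2) ^ (-a) *
          (N ^ ((n + 1 - m) / 2 : ℝ) * N ^ ((m + 1) / 2 : ℝ))) := by
        gcongr C * 3 ^ n * (?_ * (?_ * _))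
        · exact rpow_le_rpow_of_nonpos (by positivity) hDmax (by linarith)
        · exact rpow_le_rpow hD.le hDN (by linarith)
    _ = C * 3 ^ n * (max √s (t * 3⁻¹) ^ (-(2 * a)) * N ^ ((n + 2) / 2 : ℝ)) := by
        rw [← rpow_add hN, ← rpow_two, ← rpow_mul hmax.le]
        ring_nf
    _ ≤ C * 3 ^ n * (max √s (t * 3⁻¹) ^ (-(2 * a)) *
          (2 * Real.cosh (1 / 2)) ^ ((n + 2) / 2 : ℝ)) := by gcongr
    _ = _ := by ring

lemma exists_mul_cosh_half_le :
    ∃ c : ℝ, 0 < c ∧ ∀ s ≥ 0, ∀ t ≥ 1,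
      c * (2 * Real.cosh (t / 2)) ≤ Real.cosh (t / 2) - 1 + s := by
  have hone : 1 < Real.cosh (1 / 2) := Real.one_lt_cosh.2 (by norm_num)
  refine ⟨(1 - (Real.cosh (1 / 2))⁻¹) / 2, half_pos (sub_pos.2 (inv_lt_one_of_one_lt₀ hone)),
    fun s hs t ht => ?_⟩
  have hcosh : Real.cosh (1 / 2) ≤ Real.cosh (t / 2) := by
    rw [Real.cosh_le_cosh, abs_of_pos one_half_pos, abs_of_pos (by linarith)]
    linarith
  have hratio : 1 ≤ (Real.cosh (1 / 2))⁻¹ * Real.cosh (t / 2) := by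
    rwa [inv_mul_eq_div, one_le_div (Real.cosh_pos _)]
  linarith

lemma exists_abs_iteratedDeriv_le_rpow (m i j : ℕ) (b : ℝ) :
    ∃ C : ℝ, 0 ≤ C ∧ ∀ s ∈ Ioc (0 : ℝ) 2, ∀ t ≥ 1,
      |iteratedDeriv m (hypMonomial i j b s) t| ≤
        C * (2 * Real.cosh (t / 2)) ^ (i + j - b) := by
  obtain ⟨C, hC, hbound⟩ := exists_abs_iteratedDeriv_le m i j b (min (i / 2 - b) 0)
    (min_le_left _ _)
  obtain ⟨c, hc, hcD⟩ := exists_mul_cosh_half_le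
  set p := min (i / 2 - b) 0 - m / 2
  have hp : p ≤ 0 := sub_nonpos.2 ((min_le_right _ _).trans (by positivity))
  refine ⟨C * c ^ p, by positivity, fun s hs t ht => (hbound s hs t).trans ?_⟩
  have hD := hcD s hs.1.le t ht
  have hN : 0 < 2 * Real.cosh (t / 2) := by positivity
  set N := 2 * Real.cosh (t / 2)
  calc C * ((Real.cosh (t / 2) - 1 + s) ^ p * N ^ (i + j - b - p))
      ≤ C * ((c * N) ^ p * N ^ (i + j - b - p)) := by
        gcongr C * (?_ * _)
        exact rpow_le_rpow_of_nonpos (by positivity) hD hp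
    _ = C * c ^ p * (N ^ p * N ^ (i + j - b - p)) := by
        rw [mul_rpow hc.le hN.le]
        ring
    _ = C * c ^ p * N ^ (i + j - b) := by rw [← rpow_add hN, add_sub_cancel]

-- Substituting `sinh² = cosh² - 1` removes the terms of degree `0` in `exp (t / 2)`, which cancel.
lemma deriv_one_zero_one (hs : 0 < s) :
    deriv (hypMonomial 1 0 1 s) = fun t => -1 / 2 * hypMonomial 0 0 1 s t +
      s / 2 * hypMonomial 0 0 2 s t + s / 2 * hypMonomial 0 1 2 s t := by
  rw [deriv_eq 1 0 1 hs]
  ext t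
  have hD := cosh_half_sub_one_add_pos hs t
  have hsq := Real.sinh_sq (t / 2)
  simp only [hypMonomial, Nat.cast_one, Nat.cast_zero, one_add_one_eq_two, rpow_neg hD.le, rpow_one,
    rpow_two, hsq, pow_zero, pow_one]
  field_simp
  ring

lemma rpow_cosh_half_le_exp {δ : ℝ} (hδ : 0 ≤ δ) (t : ℝ) :
    (2 * Real.cosh (t / 2)) ^ (-δ) ≤ Real.exp (-(δ / 2) * t) := by
  have hexp : Real.exp (t / 2) ≤ 2 * Real.cosh (t / 2) := by
    rw [Real.cosh_eq]
    linarith [Real.exp_pos (-(t / 2))]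
  calc (2 * Real.cosh (t / 2)) ^ (-δ) ≤ Real.exp (t / 2) ^ (-δ) :=
        rpow_le_rpow_of_nonpos (Real.exp_pos _) hexp (by linarith)
    _ = Real.exp (-(δ / 2) * t) := by rw [← Real.exp_mul]; ring_nf

lemma exists_abs_iteratedDeriv_succ_one_zero_one_le (m : ℕ) :
    ∃ C : ℝ, 0 ≤ C ∧ ∀ s ∈ Ioc (0 : ℝ) 2, ∀ t ≥ 1,
      |iteratedDeriv (m + 1) (hypMonomial 1 0 1 s) t| ≤ C * Real.exp (-(1 / 2) * t) := by
  have hpiece (j : ℕ) (b : ℝ) (hb : j + 1 ≤ b) : ∃ C : ℝ, 0 ≤ C ∧ ∀ s ∈ Ioc (0 : ℝ) 2, ∀ t ≥ 1,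
      ∀ c : ℝ, |c| ≤ 1 → |c * iteratedDeriv m (hypMonomial 0 j b s) t| ≤
        C * Real.exp (-(1 / 2) * t) := by
    obtain ⟨C, hC, hbound⟩ := exists_abs_iteratedDeriv_le_rpow m 0 j b
    refine ⟨C, hC, fun s hs t ht c hc => ?_⟩
    have hexp : ((0 : ℕ) : ℝ) + j - b ≤ -1 := by push_cast; linarith
    calc |c * iteratedDeriv m (hypMonomial 0 j b s) t|
        ≤ |iteratedDeriv m (hypMonomial 0 j b s) t| := by
          rw [abs_mul]
          exact mul_le_of_le_one_left (abs_nonneg _) hc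
      _ ≤ C * (2 * Real.cosh (t / 2)) ^ (-1 : ℝ) := (hbound s hs t ht).trans <|
          mul_le_mul_of_nonneg_left (rpow_le_rpow_of_exponent_le
            (by linarith [Real.one_le_cosh (t / 2)]) hexp) hC
      _ ≤ C * Real.exp (-(1 / 2) * t) :=
          mul_le_mul_of_nonneg_left (rpow_cosh_half_le_exp zero_le_one t) hC
  obtain ⟨C₁, hC₁, h₁⟩ := hpiece 0 1 (by norm_num)
  obtain ⟨C₂, hC₂, h₂⟩ := hpiece 0 2 (by norm_num)
  obtain ⟨C₃, hC₃, h₃⟩ := hpiece 1 2 (by norm_num)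
  refine ⟨C₁ + C₂ + C₃, by positivity, fun s hs t ht => ?_⟩
  have hsmooth (j : ℕ) (b c : ℝ) : ContDiffAt ℝ m (fun t => c * hypMonomial 0 j b s t) t :=
    contDiffAt_const.mul (contDiff 0 j b hs.1).contDiffAt
  have hs_half : |s / 2| ≤ 1 := abs_le.2 ⟨by linarith [hs.1], by linarith [hs.2]⟩
  rw [iteratedDeriv_succ', deriv_one_zero_one hs.1,
    iteratedDeriv_fun_add ((hsmooth _ _ _).add (hsmooth _ _ _)) (hsmooth _ _ _),
    iteratedDeriv_fun_add (hsmooth _ _ _) (hsmooth _ _ _), iteratedDeriv_const_mul_field,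
    iteratedDeriv_const_mul_field, iteratedDeriv_const_mul_field, add_mul, add_mul]
  exact (abs_add_three _ _ _).trans (add_le_add (add_le_add
    (h₁ s hs t ht _ (by norm_num [abs_div])) (h₂ s hs t ht _ hs_half)) (h₃ s hs t ht _ hs_half))

lemma exists_abs_iteratedDeriv_le_exp (ha : 1 ≤ a) {m : ℕ} (hm : a = 1 → 1 ≤ m) :
    ∃ C ε : ℝ, 0 ≤ C ∧ 0 < ε ∧ ∀ s ∈ Ioc (0 : ℝ) 2, ∀ t ≥ 1,
      |iteratedDeriv m (hypMonomial 1 0 a s) t| ≤ C * Real.exp (-ε * t) := by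
  rcases ha.eq_or_lt with rfl | ha
  · obtain ⟨m, rfl⟩ := Nat.exists_eq_add_of_le' (hm rfl)
    obtain ⟨C, hC, hbound⟩ := exists_abs_iteratedDeriv_succ_one_zero_one_le m
    exact ⟨C, 1 / 2, hC, one_half_pos, hbound⟩
  · obtain ⟨C, hC, hbound⟩ := exists_abs_iteratedDeriv_le_rpow m 1 0 a
    refine ⟨C, (a - 1) / 2, hC, by linarith, fun s hs t ht => (hbound s hs t ht).trans ?_⟩
    rw [show ((1 : ℕ) : ℝ) + (0 : ℕ) - a = -(a - 1) by push_cast; ring]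
    exact mul_le_mul_of_nonneg_left (rpow_cosh_half_le_exp (sub_nonneg.2 ha.le) t) hC

lemma exists_abs_iteratedDeriv_mul_pow_le (ha : 1 ≤ a) {m n : ℕ} (hmn : m ≤ n + 1)
    (hm : a = 1 → 1 ≤ m) :
    ∃ C ε : ℝ, 0 ≤ C ∧ 0 < ε ∧ ∀ s ∈ Ioc (0 : ℝ) 2, ∀ t > 0,
      |iteratedDeriv m (hypMonomial 1 0 a s) t| * t ^ n ≤
        C * (max √s (t * 3⁻¹) ^ (-(2 * a)) + t ^ n * Real.exp (-ε * t)) := by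
  obtain ⟨C₁, hC₁, hsmall⟩ :=
    exists_abs_iteratedDeriv_mul_pow_le_of_le_one (zero_le_one.trans ha) hmn
  obtain ⟨C₂, ε, hC₂, hε, hlarge⟩ := exists_abs_iteratedDeriv_le_exp ha hm
  refine ⟨C₁ + C₂, ε, by positivity, hε, fun s hs t ht => ?_⟩
  have hmax : 0 ≤ max √s (t * 3⁻¹) ^ (-(2 * a)) := by positivity
  have hexp : 0 ≤ t ^ n * Real.exp (-ε * t) := by positivity
  rcases le_total t 1 with ht1 | ht1
  · refine (hsmall s hs t ⟨ht, ht1⟩).trans ?_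
    gcongr <;> linarith
  · calc |iteratedDeriv m (hypMonomial 1 0 a s) t| * t ^ n
        ≤ C₂ * Real.exp (-ε * t) * t ^ n := by gcongr; exact hlarge s hs t ht1
      _ = C₂ * (t ^ n * Real.exp (-ε * t)) := by ring
      _ ≤ (C₁ + C₂) * (max √s (t * 3⁻¹) ^ (-(2 * a)) + t ^ n * Real.exp (-ε * t)) := by
          gcongr <;> linarith

end hypMonomial

lemma exists_lintegral_max_rpow_add_pow_mul_exp_le {a ε : ℝ} (ha : 1 / 2 < a) (hε : 0 < ε) (n : ℕ) :
    ∃ C : ℝ, 0 < C ∧ ∀ s ∈ Ioc (0 : ℝ) 2,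
      ∫⁻ t in Ioi 0, ENNReal.ofReal
          (max √s (t * 3⁻¹) ^ (-(2 * a)) + t ^ n * Real.exp (-ε * t)) ≤
        ENNReal.ofReal (C * s ^ (-(a - 1 / 2))) := by
  have hint : IntegrableOn (fun t : ℝ => t ^ n * Real.exp (-ε * t)) (Ioi 0) := by
    simpa only [rpow_natCast, rpow_one] using integrableOn_rpow_mul_exp_neg_mul_rpow
      (s := n) (by linarith [(n.cast_nonneg : (0 : ℝ) ≤ n)]) one_pos hε
  have hnonneg : ∀ᵐ t ∂volume.restrict (Ioi 0), 0 ≤ t ^ n * Real.exp (-ε * t) := by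
    filter_upwards [ae_restrict_mem measurableSet_Ioi] with t ht
    have : 0 < t := ht
    positivity
  set I := ∫ t in Ioi 0, t ^ n * Real.exp (-ε * t)
  have hI : 0 ≤ I := integral_nonneg_of_ae hnonneg
  have hγ : 0 < 2 * a - 1 := by linarith
  refine ⟨3 * (1 + 1 / (2 * a - 1)) + I * 2 ^ (a - 1 / 2), by positivity, fun s hs => ?_⟩
  have hmax : ∫⁻ t in Ioi 0, ENNReal.ofReal (max √s (t * 3⁻¹) ^ (-(2 * a))) =
      ENNReal.ofReal (3 * (1 + 1 / (2 * a - 1)) * s ^ (-(a - 1 / 2))) := by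
    have h := lintegral_rpow_mul_max_rpow one_pos hγ (Real.sqrt_pos.2 hs.1)
      (by norm_num : (0 : ℝ) < 3⁻¹)
    simp only [sub_self, rpow_zero, one_mul, add_sub_cancel, rpow_neg_one, inv_inv, div_one] at h
    rw [h, Real.sqrt_eq_rpow, ← rpow_mul hs.1.le]
    ring_nf
  have hexp : I ≤ I * 2 ^ (a - 1 / 2) * s ^ (-(a - 1 / 2)) := by
    rw [mul_assoc]
    refine le_mul_of_one_le_right hI ?_
    rw [rpow_neg hs.1.le, ← div_eq_mul_inv, one_le_div (rpow_pos_of_pos hs.1 _)]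
    exact rpow_le_rpow hs.1.le hs.2 (by linarith)
  calc _ ≤ ∫⁻ t in Ioi 0, (ENNReal.ofReal (max √s (t * 3⁻¹) ^ (-(2 * a))) +
          ENNReal.ofReal (t ^ n * Real.exp (-ε * t))) :=
        lintegral_mono fun t => ENNReal.ofReal_add_le
    _ = ENNReal.ofReal (3 * (1 + 1 / (2 * a - 1)) * s ^ (-(a - 1 / 2)) + I) := by
        rw [lintegral_add_right _ (by fun_prop), hmax,
          ← ofReal_integral_eq_lintegral_ofReal hint hnonneg,
          ENNReal.ofReal_add (mul_nonneg (by positivity) (rpow_nonneg hs.1.le _)) hI]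
    _ ≤ _ := by
        rw [add_mul]
        gcongr

section Interchange

variable {Ω : Type*} [MeasurableSpace Ω] {ν : Measure Ω}

lemma aestronglyMeasurable_deriv_of_forall {F : ℝ → Ω → ℝ}
    (hF : ∀ t, AEStronglyMeasurable (F t) ν) (t : ℝ)
    (hdiff : ∀ᵐ ω ∂ν, DifferentiableAt ℝ (F · ω) t) :
    AEStronglyMeasurable (fun ω => deriv (F · ω) t) ν := by
  have hstep : Filter.Tendsto (fun n : ℕ => 1 / ((n : ℝ) + 1)) Filter.atTop
      (nhdsWithin 0 {0}ᶜ) :=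
    tendsto_nhdsWithin_iff.2 ⟨tendsto_one_div_add_atTop_nhds_zero_nat,
      Filter.Eventually.of_forall fun n => (by positivity : (1 / ((n : ℝ) + 1)) ≠ 0)⟩
  refine aestronglyMeasurable_of_tendsto_ae Filter.atTop
    (f := fun (n : ℕ) ω => (1 / ((n : ℝ) + 1))⁻¹ • (F (t + 1 / ((n : ℝ) + 1)) ω - F t ω))
    (fun n => ((hF _).sub (hF _)).const_smul (1 / ((n : ℝ) + 1))⁻¹) ?_
  filter_upwards [hdiff] with ω hω
  exact hω.hasDerivAt.tendsto_slope_zero.comp hstep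

lemma iteratedDeriv_integral_of_bounded [IsFiniteMeasure ν] (m : ℕ) : ∀ {F : ℝ → Ω → ℝ},
    (∀ t, AEStronglyMeasurable (F t) ν) → (∀ᵐ ω ∂ν, ContDiff ℝ m (F · ω)) →
    (∀ j ≤ m, ∀ T, ∃ C, ∀ᵐ ω ∂ν, ∀ t, |t| ≤ T → |iteratedDeriv j (F · ω) t| ≤ C) →
    iteratedDeriv m (fun t => ∫ ω, F t ω ∂ν) = fun t => ∫ ω, iteratedDeriv m (F · ω) t ∂ν := by
  induction m with
  | zero => simp
  | succ m ih =>
    intro F hF hsmooth hbound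
    have hderiv_meas (t : ℝ) : AEStronglyMeasurable (fun ω => deriv (F · ω) t) ν :=
      aestronglyMeasurable_deriv_of_forall hF t <| by
        filter_upwards [hsmooth] with ω hω using (hω.differentiable (by simp)).differentiableAt
    have hderiv : deriv (fun t => ∫ ω, F t ω ∂ν) = fun t => ∫ ω, deriv (F · ω) t ∂ν := by
      ext t
      obtain ⟨C₀, hC₀⟩ := hbound 0 (Nat.zero_le _) |t|
      obtain ⟨C₁, hC₁⟩ := hbound 1 (by simp) (|t| + 1)
      refine (hasDerivAt_integral_of_dominated_loc_of_deriv_le (bound := fun _ => C₁)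
        (F' := fun t ω => deriv (F · ω) t) (Metric.ball_mem_nhds t one_pos)
        (Filter.Eventually.of_forall hF) ?_ (hderiv_meas t) ?_
        (integrable_const C₁) ?_).2.deriv
      · refine Integrable.of_bound (hF t) C₀ ?_
        filter_upwards [hC₀] with ω hω using by simpa using hω t le_rfl
      · filter_upwards [hC₁] with ω hω x hx
        rw [← iteratedDeriv_one]
        refine hω x ?_
        have hsub : |x - t| < 1 := by simpa [Real.dist_eq] using hx
        linarith [abs_sub_abs_le_abs_sub x t]
      · filter_upwards [hsmooth] with ω hω x _
        exact (hω.differentiable (by simp)).differentiableAt.hasDerivAt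
    simp only [iteratedDeriv_succ', hderiv]
    refine ih hderiv_meas ?_ fun j hj T => ?_
    · filter_upwards [hsmooth] with ω hω
      exact (contDiff_succ_iff_deriv.1 (by exact_mod_cast hω)).2.2
    · simpa only [iteratedDeriv_succ'] using hbound (j + 1) (by omega) T

end Interchange

section ParametricIntegral

variable {Ω : Type*} [MeasurableSpace Ω] {ν : Measure Ω} {X : Ω → ℝ} {a σ : ℝ}

lemma measurable_iteratedDeriv {f : ℝ → ℝ} (hf : Measurable f) (m : ℕ) :
    Measurable (iteratedDeriv m f) := by
  cases m with
  | zero => simpa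
  | succ m => rw [iteratedDeriv_succ]; exact measurable_deriv _

lemma measurable_integral_hypMonomial [SFinite ν] (hX : Measurable X) (i j : ℕ) (b : ℝ) :
    Measurable fun t => ∫ ω, hypMonomial i j b (X ω) t ∂ν := by
  refine (StronglyMeasurable.integral_prod_right (f := fun t ω => hypMonomial i j b (X ω) t)
    (Measurable.stronglyMeasurable ?_)).measurable
  simp only [Function.uncurry_def, hypMonomial]
  fun_prop

lemma iteratedDeriv_integral_hypMonomial [IsFiniteMeasure ν] (ha : 1 / 2 ≤ a) (hX : Measurable X)
    (hσ : 0 < σ) (hXσ : ∀ᵐ ω ∂ν, X ω ∈ Icc σ 2) (m : ℕ) :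
    iteratedDeriv m (fun t => ∫ ω, hypMonomial 1 0 a (X ω) t ∂ν) =
      fun t => ∫ ω, iteratedDeriv m (hypMonomial 1 0 a (X ω)) t ∂ν := by
  refine iteratedDeriv_integral_of_bounded m (F := fun t ω => hypMonomial 1 0 a (X ω) t)
    (fun t => ?_) ?_ fun j _ T => ?_
  · simp only [hypMonomial]
    exact Measurable.aestronglyMeasurable (by fun_prop)
  · filter_upwards [hXσ] with ω hω using hypMonomial.contDiff 1 0 a (hσ.trans_le hω.1)
  · obtain ⟨C, hC⟩ := hypMonomial.exists_abs_iteratedDeriv_le_of_abs_le ha j hσ T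
    exact ⟨C, hXσ.mono fun ω hω => hC (X ω) hω⟩

lemma lintegral_enorm_iteratedDeriv_integral_mul_pow_le [IsFiniteMeasure ν] (ha : 1 / 2 ≤ a)
    (hX : Measurable X) (hσ : 0 < σ) (hXσ : ∀ᵐ ω ∂ν, X ω ∈ Icc σ 2) {m n : ℕ} {G : ℝ → ℝ → ℝ}
    (hG : Measurable (Function.uncurry G))
    (hbound : ∀ s ∈ Ioc (0 : ℝ) 2, ∀ t > 0,
      |iteratedDeriv m (hypMonomial 1 0 a s) t| * t ^ n ≤ G s t) :
    ∫⁻ t in Ioi 0, ‖iteratedDeriv m (fun t => ∫ ω, hypMonomial 1 0 a (X ω) t ∂ν) t * t ^ n‖ₑ ≤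
      ∫⁻ ω, (∫⁻ t in Ioi 0, ENNReal.ofReal (G (X ω) t)) ∂ν := by
  have henorm (t : ℝ) (ht : t ∈ Ioi 0) :
      ‖iteratedDeriv m (fun t => ∫ ω, hypMonomial 1 0 a (X ω) t ∂ν) t * t ^ n‖ₑ ≤
        ∫⁻ ω, ENNReal.ofReal (G (X ω) t) ∂ν := by
    rw [iteratedDeriv_integral_hypMonomial ha hX hσ hXσ, ← integral_mul_const]
    refine (enorm_integral_le_lintegral_enorm _).trans (lintegral_mono_ae ?_)
    filter_upwards [hXσ] with ω hω
    have ht : 0 < t := ht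
    rw [← ofReal_norm, norm_mul, norm_of_nonneg (by positivity : 0 ≤ t ^ n)]
    exact ENNReal.ofReal_le_ofReal (hbound (X ω) ⟨hσ.trans_le hω.1, hω.2⟩ t ht)
  have hmeas : Measurable fun p : ℝ × Ω => ENNReal.ofReal (G (X p.2) p.1) :=
    (hG.comp ((hX.comp measurable_snd).prodMk measurable_fst)).ennreal_ofReal
  calc _ ≤ ∫⁻ t in Ioi 0, ∫⁻ ω, ENNReal.ofReal (G (X ω) t) ∂ν :=
        setLIntegral_mono' measurableSet_Ioi henorm
    _ = _ := lintegral_lintegral_swap hmeas.aemeasurable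

lemma exists_lintegral_iteratedDeriv_integral_mul_pow_le (ha : 1 ≤ a) {m n : ℕ} (hmn : m ≤ n + 1)
    (hm : a = 1 → 1 ≤ m) :
    ∃ C : ℝ, 0 ≤ C ∧ ∀ (ν : Measure Ω) [IsFiniteMeasure ν] (X : Ω → ℝ) (σ : ℝ), Measurable X →
      0 < σ → (∀ᵐ ω ∂ν, X ω ∈ Icc σ 2) →
      ∫⁻ t in Ioi 0,
          ‖iteratedDeriv m (fun t => ∫ ω, hypMonomial 1 0 a (X ω) t ∂ν) t * t ^ n‖ₑ ≤
        ENNReal.ofReal C * ∫⁻ ω, ENNReal.ofReal (X ω ^ (-(a - 1 / 2))) ∂ν := by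
  obtain ⟨C₁, ε, hC₁, hε, hpoint⟩ := hypMonomial.exists_abs_iteratedDeriv_mul_pow_le ha hmn hm
  obtain ⟨C₂, hC₂, htime⟩ := exists_lintegral_max_rpow_add_pow_mul_exp_le
    (show 1 / 2 < a by linarith) hε n
  refine ⟨C₁ * C₂, by positivity, fun ν _ X σ hX hσ hXσ => ?_⟩
  refine (lintegral_enorm_iteratedDeriv_integral_mul_pow_le (by linarith) hX hσ hXσ
    (by fun_prop) hpoint).trans ?_
  rw [← lintegral_const_mul' _ _ ENNReal.ofReal_ne_top]
  refine lintegral_mono_ae ?_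
  filter_upwards [hXσ] with ω hω
  rw [← ENNReal.ofReal_mul (by positivity), mul_assoc]
  simp only [ENNReal.ofReal_mul hC₁]
  rw [lintegral_const_mul' _ _ ENNReal.ofReal_ne_top]
  gcongr
  exact htime (X ω) ⟨hσ.trans_le hω.1, hω.2⟩

end ParametricIntegral

section JacobiPoisson

variable {α β θ φ : ℝ}

lemma ae_qfun_mem_Icc (α β : ℝ) [SFinite (PiMeasure α)] [SFinite (PiMeasure β)]
    (hθ : θ ∈ Ioo 0 π) (hφ : φ ∈ Ioo 0 π) :
    ∀ᵐ ω ∂(PiMeasure α).prod (PiMeasure β),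
      qfun θ φ ω.1 ω.2 ∈ Icc (1 - cos ((θ - φ) / 2)) 2 := by
  filter_upwards [Measure.quasiMeasurePreserving_fst.ae (ae_mem_Icc_PiMeasure α),
    Measure.quasiMeasurePreserving_snd.ae (ae_mem_Icc_PiMeasure β)] with ω hu hv
    using qfun_mem_Icc hθ hφ hu hv

lemma measurable_qfun (θ φ : ℝ) : Measurable fun ω : ℝ × ℝ => qfun θ φ ω.1 ω.2 := by
  unfold qfun
  fun_prop

lemma Hker_eq_integral_hypMonomial (hα : -(1 / 2) ≤ α) (hβ : -(1 / 2) ≤ β) (hθ : θ ∈ Ioo 0 π)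
    (hφ : φ ∈ Ioo 0 π) (hne : θ ≠ φ) (t : ℝ) :
    Hker α β t θ φ = 2 ^ (-(α + β + 2)) / (jacobiMeasure α β (Ioo 0 π)).toReal *
      ∫ ω, hypMonomial 1 0 (α + β + 2) (qfun θ φ ω.1 ω.2) t
        ∂(PiMeasure α).prod (PiMeasure β) := by
  have := isFiniteMeasure_PiMeasure hα
  have := isFiniteMeasure_PiMeasure hβ
  have hx : 0 < 1 - cos ((θ - φ) / 2) := one_sub_cos_half_sub_pos hθ hφ hne
  have hint : Integrable (fun ω : ℝ × ℝ =>
      1 / (Real.cosh (t / 2) - 1 + qfun θ φ ω.1 ω.2) ^ (α + β + 2))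
      ((PiMeasure α).prod (PiMeasure β)) := by
    have hmeas := measurable_qfun θ φ
    refine Integrable.of_bound (Measurable.aestronglyMeasurable (by fun_prop))
      (1 / (1 - cos ((θ - φ) / 2)) ^ (α + β + 2)) ?_
    filter_upwards [ae_qfun_mem_Icc α β hθ hφ] with ω hω
    have hle := hω.1.trans (hypMonomial.le_cosh_half_sub_one_add _ t)
    have hpos := hx.trans_le hle
    rw [norm_of_nonneg (by positivity)]
    gcongr
    linarith
  rw [Hker, mul_assoc, ← integral_prod _ hint, ← integral_const_mul]
  congr 1
  refine integral_congr_ae ?_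
  filter_upwards [ae_qfun_mem_Icc α β hθ hφ] with ω hω
  have hpos := hypMonomial.cosh_half_sub_one_add_pos (hx.trans_le hω.1) t
  rw [hypMonomial, rpow_neg hpos.le, pow_one, pow_zero, mul_one, one_div]

lemma exists_lintegral_iteratedDeriv_Hker_mul_pow_le (hα : -(1 / 2) ≤ α) (hβ : -(1 / 2) ≤ β)
    {m n : ℕ} (hmn : m ≤ n + 1) (hcrit : α + β = -1 → 1 ≤ m) :
    ∃ C : ℝ, 0 < C ∧ ∀ θ ∈ Ioo 0 π, ∀ φ ∈ Ioo 0 π, θ ≠ φ →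
      ∫⁻ t in Ioi 0, ‖iteratedDeriv m (Hker α β · θ φ) t * t ^ n‖ₑ ≤
        ENNReal.ofReal (C / (jacobiMeasure α β (jacobiBall θ |θ - φ|)).toReal) := by
  have := isFiniteMeasure_PiMeasure hα
  have := isFiniteMeasure_PiMeasure hβ
  obtain ⟨C₁, hC₁, hq⟩ := exists_lintegral_qfun_rpow_le hα hβ
  obtain ⟨C₂, hC₂, htime⟩ := exists_lintegral_iteratedDeriv_integral_mul_pow_le (Ω := ℝ × ℝ)
    (by linarith : 1 ≤ α + β + 2) hmn fun h => hcrit (by linarith)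
  set c := 2 ^ (-(α + β + 2)) / (jacobiMeasure α β (Ioo 0 π)).toReal
  have hc : 0 ≤ c := by positivity
  refine ⟨(c * C₂ + 1) * C₁, by positivity, fun θ hθ φ hφ hne => ?_⟩
  have hqtime := htime ((PiMeasure α).prod (PiMeasure β)) (fun ω => qfun θ φ ω.1 ω.2) _
    (measurable_qfun θ φ) (one_sub_cos_half_sub_pos hθ hφ hne) (ae_qfun_mem_Icc α β hθ hφ)
  simp only [Hker_eq_integral_hypMonomial hα hβ hθ hφ hne, iteratedDeriv_const_mul_field,
    enorm_mul, mul_assoc]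
  simp only [enorm_mul, show α + β + 2 - 1 / 2 = α + β + 3 / 2 by ring] at hqtime
  calc _ ≤ ENNReal.ofReal c * (ENNReal.ofReal C₂ *
        ∫⁻ ω, ENNReal.ofReal (qfun θ φ ω.1 ω.2 ^ (-(α + β + 3 / 2)))
          ∂(PiMeasure α).prod (PiMeasure β)) := by
        rw [lintegral_const_mul' _ _ enorm_ne_top, Real.enorm_of_nonneg hc]
        gcongr
    _ ≤ ENNReal.ofReal (c * C₂ + 1) *
        ENNReal.ofReal (C₁ / (jacobiMeasure α β (jacobiBall θ |θ - φ|)).toReal) := by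
        rw [← mul_assoc, ← ENNReal.ofReal_mul hc]
        gcongr
        · linarith
        · exact hq θ hθ φ hφ hne
    _ = _ := by rw [← ENNReal.ofReal_mul (by positivity), mul_div_assoc]

lemma measurable_Hker (hα : -(1 / 2) ≤ α) (hβ : -(1 / 2) ≤ β) (hθ : θ ∈ Ioo 0 π)
    (hφ : φ ∈ Ioo 0 π) (hne : θ ≠ φ) : Measurable (Hker α β · θ φ) := by
  have := isFiniteMeasure_PiMeasure hα
  have := isFiniteMeasure_PiMeasure hβ
  simp only [Hker_eq_integral_hypMonomial hα hβ hθ hφ hne]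
  exact (measurable_integral_hypMonomial (measurable_qfun θ φ) _ _ _).const_mul _

end JacobiPoisson

theorem Sk_growth_general {α β : ℝ} (hα : -(1 / 2) ≤ α) (hβ : -(1 / 2) ≤ β) {m n : ℕ}
    (hmn : m ≤ n + 1) (hcrit : α + β = -1 → 1 ≤ m) :
    ∃ C : ℝ, 0 < C ∧ ∀ θ ∈ Ioo 0 π, ∀ φ ∈ Ioo 0 π, θ ≠ φ →
      IntegrableOn (fun t => iteratedDeriv m (fun t' => Hker α β t' θ φ) t * t ^ n) (Ioi 0) ∧
      |∫ t in Ioi 0, iteratedDeriv m (fun t' => Hker α β t' θ φ) t * t ^ n|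
        ≤ C / (jacobiMeasure α β (jacobiBall θ |θ - φ|)).toReal := by
  obtain ⟨C, hC, hbound⟩ := exists_lintegral_iteratedDeriv_Hker_mul_pow_le hα hβ hmn hcrit
  refine ⟨C, hC, fun θ hθ φ hφ hne => ⟨⟨?_, ?_⟩, ?_⟩⟩
  · exact ((measurable_iteratedDeriv (measurable_Hker hα hβ hθ hφ hne) m).mul
      (measurable_id.pow_const n)).aestronglyMeasurable
  · exact (hbound θ hθ φ hφ hne).trans_lt ENNReal.ofReal_lt_top
  · rw [← Real.norm_eq_abs, ← toReal_enorm]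
    exact ENNReal.toReal_le_of_le_ofReal (by positivity)
      ((enorm_integral_le_lintegral_enorm _).trans (hbound θ hθ φ hφ hne))

/-- growth estimate for the kernels `S_k^{α,β}`. -/
theorem Sk_growth (α β : ℝ) (hα : -(1 / 2) ≤ α) (hβ : -(1 / 2) ≤ β)
    (k₀ k : ℕ) (hk₀ : 1 ≤ k₀) (hk : k ≤ k₀) (hcrit : α + β = -1 → 1 ≤ k) :
    ∃ C : ℝ, 0 < C ∧
      ∀ θ ∈ Ioo (0 : ℝ) π, ∀ φ ∈ Ioo (0 : ℝ) π, θ ≠ φ →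
        |∫ t in Ioi (0 : ℝ),
            iteratedDeriv (2 * k) (fun t' => Hker α β t' θ φ) t * t ^ (2 * k₀ - 1)|
          ≤ C / (jacobiMeasure α β (jacobiBall θ |θ - φ|)).toReal := by
  obtain ⟨C, hC, hbound⟩ := Sk_growth_general hα hβ (m := 2 * k) (n := 2 * k₀ - 1) (by omega)
    fun h => by have := hcrit h; omega
  exact ⟨C, hC, fun θ hθ φ hφ hne => (hbound θ hθ φ hφ hne).2⟩
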